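/- arXiv:2510.12261 — 2 statements merged into one kernel-verified Lean document; each statement's English description precedes it below -/
import Mathlib

section
/- Suppose ℓ ≥ 2 and 1 ≤ s < t ≤ ℓ. Then ((λ·C_t)²·D_{st})² = 1; moreover C_t and U_t are invertible, and setting X = C_t·D_{st}·C_t⁻¹ one has X·U_t·X⁻¹·U_t⁻¹ = U_s·D_{st}. -/
theorem wr_sum_line {r ℓ : ℕ} [NeZero r] {𝔽 : Type*} [Field 𝔽] (t : Fin ℓ) (η : Fin ℓ → ZMod r)
    (f : (Fin ℓ → ZMod r) → 𝔽) :
    ∑ ζ, (if ∀ i, i ≠ t → η i = ζ i then f ζ else 0) = ∑ k, f (Function.update η t k) := by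
  classical
  rw [← Finset.sum_filter]
  symm
  refine Finset.sum_bij (fun k _ => Function.update η t k) ?_ ?_ ?_ ?_
  · intro k _
    simp only [Finset.mem_filter, Finset.mem_univ, true_and]
    intro i hi
    simp [hi]
  · intro a _ b _ h
    have := congrFun h t
    simpa using this
  · intro ζ hζ
    simp only [Finset.mem_filter, Finset.mem_univ, true_and] at hζ
    refine ⟨ζ t, Finset.mem_univ _, ?_⟩
    funext i
    by_cases hi : i = t
    · subst hi; simp
    · simp [hi, hζ i hi]
  · intro k _
    rfl

theorem wr_u {r : ℕ} [Fact (Nat.Prime r)] (hr : Odd r) {𝔽 : Type*} [Field 𝔽] {θ : 𝔽}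
    (hθ : IsPrimitiveRoot θ r) (x : ZMod r) :
    θ ^ (x.val * (x.val + r) / 2) = θ ^ (x * x * 2⁻¹ : ZMod r).val := by
  have h2 : (2 : ZMod r) ≠ 0 := by
    intro h
    have h' : ((2 : ℕ) : ZMod r) = 0 := by exact_mod_cast h
    rw [ZMod.natCast_eq_zero_iff] at h'
    have := Nat.le_of_dvd (by norm_num) h'
    have h3 := (Fact.out : Nat.Prime r).two_le
    obtain ⟨k, hk⟩ := hr
    omega
  have hd : 2 ∣ x.val * (x.val + r) := by
    rcases Nat.even_or_odd x.val with h | h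
    · exact (even_iff_two_dvd.mp h).mul_right _
    · exact (even_iff_two_dvd.mp (h.add_odd hr)).mul_left _
  obtain ⟨m, hm⟩ := hd
  rw [hm, Nat.mul_div_cancel_left _ (by norm_num)]
  have hmz : (m : ZMod r) = x * x * 2⁻¹ := by
    have := congrArg (Nat.cast : ℕ → ZMod r) hm
    push_cast at this
    rw [ZMod.natCast_zmod_val, ZMod.natCast_self, add_zero] at this
    rw [this]
    field_simp
  rw [← hmz, ZMod.val_natCast]
  exact (pow_mod_orderOf θ m).symm.trans (by rw [← hθ.eq_orderOf])

/-- For `ℓ ≥ 2` and `s < t`: `((λC_t)²D_{st})² = 1`, `C_t` and `U_t` are invertible,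
and for `X = C_t D_{st} C_t⁻¹` one has `X U_t X⁻¹ U_t⁻¹ = U_s D_{st}`. -/
theorem weil_relations2
    {r : ℕ} [Fact (Nat.Prime r)] (hr : Odd r)
    {𝔽 : Type*} [Field 𝔽] {θ : 𝔽} (hθ : IsPrimitiveRoot θ r)
    {ℓ : ℕ} (hℓ : 2 ≤ ℓ)
    (Cb : Matrix (ZMod r) (ZMod r) 𝔽)
    (hCb : ∀ i j : ZMod r, Cb i j = θ ^ (i * j).val)
    (lam : 𝔽) (hlam : lam = (-(r : 𝔽)) ^ ((r - 1) / 2) * Cb.det⁻¹)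
    (C : Fin ℓ → Matrix (Fin ℓ → ZMod r) (Fin ℓ → ZMod r) 𝔽)
    (hC : ∀ t η ξ, C t η ξ =
      if ∀ i, i ≠ t → η i = ξ i then θ ^ (η t * ξ t).val else 0)
    (U : Fin ℓ → Matrix (Fin ℓ → ZMod r) (Fin ℓ → ZMod r) 𝔽)
    (hU : ∀ t, U t = Matrix.diagonal fun ξ => θ ^ ((ξ t).val * ((ξ t).val + r) / 2))
    (D : Fin ℓ → Fin ℓ → Matrix (Fin ℓ → ZMod r) (Fin ℓ → ZMod r) 𝔽)
    (hD : ∀ s t, D s t = Matrix.diagonal fun ξ => θ ^ (ξ s * ξ t).val)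
    (s t : Fin ℓ) (hst : s < t) :
    ((lam • C t) ^ 2 * D s t) ^ 2 = 1 ∧
      IsUnit (C t) ∧ IsUnit (U t) ∧
      (C t * D s t * (C t)⁻¹) * U t * (C t * D s t * (C t)⁻¹)⁻¹ * (U t)⁻¹
        = U s * D s t := by
  classical
  have hst' : s ≠ t := hst.ne
  obtain ⟨e, he0, hea, hes⟩ : ∃ e : ZMod r → 𝔽, (∀ n, e n = θ ^ n.val) ∧
      (∀ a b, e (a + b) = e a * e b) ∧
      (∀ a, ∑ k, e (k * a) = if a = 0 then (r : 𝔽) else 0) := by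
    refine ⟨AddChar.zmodChar r hθ.pow_eq_one, fun n => AddChar.zmodChar_apply _ n,
      fun a b => AddChar.map_add_eq_mul _ a b, fun a => ?_⟩
    have := AddChar.sum_mulShift a (AddChar.zmodChar_primitive_of_primitive_root r hθ)
    rw [this]
    simp [ZMod.card]
  have h2 : (2 : ZMod r) ≠ 0 := by
    intro h
    have h' : ((2 : ℕ) : ZMod r) = 0 := by exact_mod_cast h
    rw [ZMod.natCast_eq_zero_iff] at h'
    have := Nat.le_of_dvd (by norm_num) h'
    have h3 := (Fact.out : Nat.Prime r).two_le
    obtain ⟨k, hk⟩ := hr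
    omega
  have hz : e 0 = 1 := by simp [he0]
  have hr0 : (r : 𝔽) ≠ 0 := by
    have := hθ.neZero'
    exact this.out
  simp only [wr_u hr hθ, ← he0] at hC hU hD hCb
  -- the small matrix
  have hCb2 : Cb * Cb = Matrix.of fun i j => if i + j = 0 then (r : 𝔽) else 0 := by
    ext i j
    rw [Matrix.mul_apply, Matrix.of_apply, ← hes]
    refine Finset.sum_congr rfl fun k _ => ?_
    rw [hCb, hCb, ← hea]
    congr 1; ring
  have hCb4 : (Cb * Cb) * (Cb * Cb) = ((r : 𝔽) ^ 2) • (1 : Matrix (ZMod r) (ZMod r) 𝔽) := by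
    rw [hCb2]
    ext i j
    simp only [Matrix.mul_apply, Matrix.of_apply, Matrix.smul_apply, Matrix.one_apply]
    have : ∀ x : ZMod r, i + x = 0 ↔ x = -i := fun x => by
      rw [add_comm, eq_neg_iff_add_eq_zero]
    simp only [this, ite_mul, zero_mul, Finset.sum_ite_eq', Finset.mem_univ, if_true]
    have h3 : -i + j = 0 ↔ i = j := by rw [neg_add_eq_zero]
    simp only [h3]
    split_ifs <;> simp [sq]
  have hdet : Cb.det ^ 4 = (r : 𝔽) ^ (2 * r) := by
    have := congrArg Matrix.det hCb4
    rw [Matrix.det_mul, Matrix.det_mul, Matrix.det_smul, ZMod.card, Matrix.det_one] at this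
    rw [pow_mul, ← mul_one (((r : 𝔽) ^ 2) ^ r), ← this]; ring
  have hlam4 : lam ^ 4 * (r : 𝔽) ^ 2 = 1 := by
    obtain ⟨k, hk⟩ := hr
    have hk' : (r - 1) / 2 = k := by omega
    rw [hlam, hk', mul_pow, inv_pow, hdet, ← pow_mul, neg_pow, hk]
    have : (-1 : 𝔽) ^ (k * 4) = 1 := by
      rw [mul_comm, pow_mul]; norm_num
    rw [this, ← hk]
    have h4 : (r : 𝔽) ^ (2 * r) = (r : 𝔽) ^ (k * 4) * (r : 𝔽) ^ 2 := by
      rw [← pow_add]; congr 1; omega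
    rw [h4]
    field_simp
  -- the big matrices
  let P : Matrix (Fin ℓ → ZMod r) (Fin ℓ → ZMod r) 𝔽 :=
    Matrix.of fun η ξ => if Function.update η t (-η t) = ξ then 1 else 0
  let S : Matrix (Fin ℓ → ZMod r) (Fin ℓ → ZMod r) 𝔽 :=
    Matrix.of fun η ξ => if Function.update η t (η t + η s) = ξ then 1 else 0
  have hPm : ∀ (M : Matrix (Fin ℓ → ZMod r) (Fin ℓ → ZMod r) 𝔽) η ξ,
      (P * M) η ξ = M (Function.update η t (-η t)) ξ := by
    intro M η ξ
    simp [P, Matrix.mul_apply]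
  have hSm : ∀ (M : Matrix (Fin ℓ → ZMod r) (Fin ℓ → ZMod r) 𝔽) η ξ,
      (S * M) η ξ = M (Function.update η t (η t + η s)) ξ := by
    intro M η ξ
    simp [S, Matrix.mul_apply]
  have hPP : P * P = 1 := by
    ext η ξ
    rw [hPm]
    simp [P, Matrix.one_apply]
  have hCC : C t * C t = (r : 𝔽) • P := by
    ext η ξ
    rw [Matrix.mul_apply]
    simp only [hC, ite_mul, zero_mul]
    rw [wr_sum_line t η (fun ζ => e (η t * ζ t) *
      if ∀ i, i ≠ t → ζ i = ξ i then e (ζ t * ξ t) else 0)]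
    have h1 : ∀ k, (∀ i, i ≠ t → Function.update η t k i = ξ i) ↔ (∀ i, i ≠ t → η i = ξ i) := by
      intro k
      refine forall_congr' fun i => forall_congr' fun hi => ?_
      simp [hi]
    simp only [h1, Function.update_self, Matrix.smul_apply, P, Matrix.of_apply, smul_eq_mul]
    by_cases h : ∀ i, i ≠ t → η i = ξ i
    · simp only [if_pos h]
      have h5 : ∀ k, e (η t * k) * e (k * ξ t) = e (k * (η t + ξ t)) := fun k => by
        rw [← hea]; congr 1; ring
      simp only [h5, hes]
      have h6 : Function.update η t (-η t) = ξ ↔ η t + ξ t = 0 := by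
        constructor
        · intro h'
          have := congrFun h' t
          simp only [Function.update_self] at this
          rw [← this]; ring
        · intro h'
          funext i
          by_cases hi : i = t
          · subst hi
            simp only [Function.update_self]
            exact neg_eq_of_add_eq_zero_right h'
          · simp [hi, h i hi]
      simp only [h6]
      split_ifs <;> simp
    · have h6 : Function.update η t (-η t) ≠ ξ := by
        intro h'
        apply h
        intro i hi
        rw [← h']
        simp [hi]
      simp [if_neg h, h6]
  have hPD : D s t * (P * D s t) = P := by
    ext η ξ
    rw [hD, Matrix.diagonal_mul, hPm, Matrix.diagonal_apply]
    simp only [P, Matrix.of_apply]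
    split_ifs with h
    · rw [← hea]
      simp [hst', hz]
    · simp
  have hCunit : IsUnit (C t) := by
    refine IsUnit.of_mul_eq_one ((r : 𝔽)⁻¹ • (C t * P)) ?_
    rw [Matrix.mul_smul, ← mul_assoc, hCC, Matrix.smul_mul, hPP, smul_smul, inv_mul_cancel₀ hr0,
      one_smul]
  have hne : ∀ a, e a ≠ 0 := by
    intro a h
    have := hea a (-a)
    rw [add_neg_cancel, hz, h, zero_mul] at this
    exact one_ne_zero this
  have hdiag : ∀ f : (Fin ℓ → ZMod r) → ZMod r, IsUnit (Matrix.diagonal fun ξ => e (f ξ)) := by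
    intro f
    refine IsUnit.of_mul_eq_one (Matrix.diagonal fun ξ => (e (f ξ))⁻¹) ?_
    rw [Matrix.diagonal_mul_diagonal]
    simp [hne]
  have hUunit : IsUnit (U t) := by rw [hU]; exact hdiag _
  have hDunit : IsUnit (D s t) := by rw [hD]; exact hdiag _
  refine ⟨?_, hCunit, hUunit, ?_⟩
  · have h7 : ((lam • C t) ^ 2 * D s t) = (lam ^ 2 * r) • (P * D s t) := by
      rw [smul_pow, sq (C t), hCC, smul_smul, Matrix.smul_mul]
    rw [h7, smul_pow, sq (P * D s t), mul_assoc, hPD, hPP]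
    have : (lam ^ 2 * (r : 𝔽)) ^ 2 = 1 := by rw [← hlam4]; ring
    rw [this, one_smul]
  · have hSC : C t * D s t = S * C t := by
      ext η ξ
      rw [hSm, hD, Matrix.mul_diagonal, hC, hC]
      have h1 : (∀ i, i ≠ t → Function.update η t (η t + η s) i = ξ i) ↔
          (∀ i, i ≠ t → η i = ξ i) := by
        refine forall_congr' fun i => forall_congr' fun hi => ?_
        simp [hi]
      simp only [h1, Function.update_self]
      split_ifs with h
      · rw [← hea, ← h s hst']; congr 1; ring
      · simp
    have hX : C t * D s t * (C t)⁻¹ = S := by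
      rw [hSC, Matrix.mul_nonsing_inv_cancel_right _ _ ((Matrix.isUnit_iff_isUnit_det _).mp hCunit)]
    have hSunit : IsUnit S := by
      rw [← hX]
      exact (hCunit.mul hDunit).mul ((Matrix.isUnit_nonsing_inv_iff).mpr hCunit)
    have hSU : S * U t = U s * D s t * U t * S := by
      ext η ξ
      rw [hSm, hU, hU, hD, Matrix.diagonal_mul_diagonal, Matrix.diagonal_mul_diagonal,
        Matrix.diagonal_mul, Matrix.diagonal_apply]
      simp only [S, Matrix.of_apply]
      split_ifs with h
      · rw [Function.update_self, mul_one, ← hea, ← hea]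
        congr 1
        field_simp
        ring
      · simp
    rw [hX, hSU, Matrix.mul_nonsing_inv_cancel_right _ _ ((Matrix.isUnit_iff_isUnit_det _).mp hSunit),
      Matrix.mul_nonsing_inv_cancel_right _ _ ((Matrix.isUnit_iff_isUnit_det _).mp hUunit)]
end

section
/- The determinant of C satisfies det(C) = r^{(r−1)/2} · ∑_{ξ ∈ ZMod r} θ^{ξ.val·(ξ.val+r)/2}, and also det(C) = ε · r^{(r−1)/2} · ∑_{ξ ∈ ZMod r} θ^{(ξ·ξ).val}, where ε ∈ 𝔽 is the image of the Legendre symbol (2/r) ∈ {±1} ⊆ ℤ. -/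
lemma wd_sign_neg {r : ℕ} [Fact (Nat.Prime r)] (hr : Odd r) :
    Equiv.Perm.sign (Equiv.neg (ZMod r)) = (-1) ^ (r / 2) := by
  have h2 : (2 : ZMod r) ≠ 0 := by
    have : Fact (2 < r) := ⟨by
      have := (Fact.out : Nat.Prime r).two_le
      rcases hr with ⟨k, hk⟩; omega⟩
    intro h
    have h' : ((2 : ℕ) : ZMod r) = 0 := by exact_mod_cast h
    rw [ZMod.natCast_eq_zero_iff] at h'
    exact absurd (Nat.le_of_dvd (by norm_num) h') (by have := this.out; omega)
  have hs : (Equiv.neg (ZMod r)) ^ 2 = 1 := by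
    ext x; simp [pow_two]
  rw [Equiv.Perm.sign_of_pow_two_eq_one hs]
  have : (Equiv.neg (ZMod r)).support = Finset.univ.erase 0 := by
    ext x
    simp only [Equiv.Perm.mem_support, Equiv.neg_apply, Finset.mem_erase, Finset.mem_univ, and_true]
    refine not_congr ⟨fun h => ?_, fun h => by simp [h]⟩
    have : 2 * x = 0 := by linear_combination -h
    exact (mul_eq_zero.mp this).resolve_left h2
  rw [Equiv.Perm.card_fixedPoints, Equiv.Perm.sum_cycleType, this, Finset.card_erase_of_mem (Finset.mem_univ _), Finset.card_univ, ZMod.card]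
  congr 1
  rcases hr with ⟨k, hk⟩; omega

lemma wd_gauss {r : ℕ} [Fact (Nat.Prime r)] (hr2 : r ≠ 2)
    {𝔽 : Type*} [Field 𝔽] (ψ : AddChar (ZMod r) 𝔽) (hψ : ψ.IsPrimitive)
    (a : ZMod r) (ha : a ≠ 0) :
    ∑ x : ZMod r, ψ (a * x ^ 2) = ((quadraticChar (ZMod r) a : ℤ) : 𝔽) * ∑ x : ZMod r, ψ (x ^ 2) := by
  have hc : ringChar (ZMod r) ≠ 2 := (ZMod.ringChar_zmod_n r).substr hr2
  have key : ∀ b : ZMod r, b ≠ 0 → ∑ x : ZMod r, ψ (b * x ^ 2) =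
      ∑ t : ZMod r, ((quadraticChar (ZMod r) t : ℤ) : 𝔽) * ψ (b * t) := by
    intro b hb
    have h0 : ∑ t : ZMod r, ψ (b * t) = 0 := by
      have := AddChar.sum_mulShift b hψ
      rw [if_neg hb] at this
      simpa [mul_comm] using this
    rw [← Finset.sum_fiberwise (s := Finset.univ) (g := fun x : ZMod r => x ^ 2)]
    have : ∀ t : ZMod r, ∑ x ∈ Finset.univ.filter (fun x : ZMod r => x ^ 2 = t), ψ (b * x ^ 2)
        = ((quadraticChar (ZMod r) t : ℤ) : 𝔽) * ψ (b * t) + ψ (b * t) := by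
      intro t
      have h1 := quadraticChar_card_sqrts hc t
      have h2 : ((Finset.univ.filter (fun x : ZMod r => x ^ 2 = t)).card : ℤ)
          = quadraticChar (ZMod r) t + 1 := by
        rw [← h1]; congr 2; ext x; simp
      rw [Finset.sum_congr rfl (g := fun _ => ψ (b * t))
        (by intro x hx; rw [(Finset.mem_filter.mp hx).2])]
      rw [Finset.sum_const, nsmul_eq_mul, ← Int.cast_natCast, h2]
      push_cast; ring
    rw [Finset.sum_congr rfl (fun t _ => this t), Finset.sum_add_distrib, h0, add_zero]
  rw [key a ha]
  have k1 := key 1 one_ne_zero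
  simp only [one_mul] at k1
  rw [k1, Finset.mul_sum, ← Equiv.sum_comp (Equiv.mulLeft₀ a ha)
    (fun t => ((quadraticChar (ZMod r) a : ℤ) : 𝔽) * (((quadraticChar (ZMod r) t : ℤ) : 𝔽) * ψ t))]
  refine Finset.sum_congr rfl fun t _ => ?_
  have := quadraticChar_sq_one ha
  simp only [Equiv.mulLeft₀_apply, map_mul, Int.cast_mul]
  have h3 : ((quadraticChar (ZMod r) a : ℤ) : 𝔽) ^ 2 = 1 := by exact_mod_cast congrArg (Int.cast (R := 𝔽)) this
  linear_combination (-((quadraticChar (ZMod r) t : ℤ) : 𝔽) * ψ (a * t)) * h3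

lemma wd_main {r : ℕ} [Fact (Nat.Prime r)] (hr : Odd r)
    {𝔽 : Type*} [Field 𝔽] (hr0 : (r : 𝔽) ≠ 0) (ψ : AddChar (ZMod r) 𝔽) (hψ : ψ.IsPrimitive)
    (h : ZMod r) (h2 : 2 * h = 1)
    (C : Matrix (ZMod r) (ZMod r) 𝔽) (hC : ∀ i j : ZMod r, C i j = ψ (i * j)) :
    C.det = (r : 𝔽) ^ ((r - 1) / 2) * ∑ x : ZMod r, ψ (h * x ^ 2) := by
  have hr2 : r ≠ 2 := by rintro rfl; revert hr; decide
  have hh : h ≠ 0 := by rintro rfl; simp at h2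
  set G := ∑ x : ZMod r, ψ (h * x ^ 2) with hG
  set G' := ∑ x : ZMod r, ψ (-h * x ^ 2) with hG'
  set ε : 𝔽 := (-1) ^ (r / 2) with hε
  have hεε : ε * ε = 1 := by rw [hε, ← mul_pow]; simp
  have hGG' : G' = ε * G := by
    rw [hG, hG', wd_gauss hr2 ψ hψ h hh, wd_gauss hr2 ψ hψ (-h) (neg_ne_zero.mpr hh),
      neg_eq_neg_one_mul h, map_mul, Int.cast_mul, mul_assoc]
    congr 1
    have := legendreSym.at_neg_one (p := r) hr2
    rw [ZMod.χ₄_eq_neg_one_pow (Nat.odd_iff.mp hr), legendreSym] at this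
    push_cast at this
    rw [this, hε]; push_cast; rfl
  have hGG : G * G' = r := by
    rw [hG, hG', Finset.sum_mul_sum, Finset.sum_comm]
    have : ∀ y : ZMod r, ∑ x : ZMod r, ψ (h * x ^ 2) * ψ (-h * y ^ 2)
        = ∑ u : ZMod r, ψ (h * u ^ 2) * ψ (y * u) := by
      intro y
      rw [← Equiv.sum_comp (Equiv.addRight y)]
      refine Finset.sum_congr rfl fun u _ => ?_
      rw [← AddChar.map_add_eq_mul, ← AddChar.map_add_eq_mul]
      congr 1
      simp only [Equiv.coe_addRight]
      linear_combination (u * y) * h2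
    rw [Finset.sum_congr rfl fun y _ => this y, Finset.sum_comm]
    simp_rw [← Finset.mul_sum, AddChar.sum_mulShift _ hψ]
    simp [ZMod.card]
  have hGsq : G ^ 2 = ε * r := by
    rw [hGG'] at hGG
    linear_combination ε * hGG - G ^ 2 * hεε
  set D : Matrix (ZMod r) (ZMod r) 𝔽 := Matrix.diagonal fun i => ψ (h * i ^ 2) with hD
  have hDdet : D.det ^ 3 = 1 := by
    have hsum : ∀ s : Finset (ZMod r), ∏ i ∈ s, ψ (h * i ^ 2) = ψ (∑ i ∈ s, h * i ^ 2) := by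
      intro s
      induction s using Finset.induction_on with
      | empty => simp
      | insert a s ha ih =>
        rw [Finset.prod_insert ha, Finset.sum_insert ha, ih, AddChar.map_add_eq_mul]
    rw [hD, Matrix.det_diagonal, hsum, ← AddChar.map_nsmul_eq_pow,
      ← AddChar.map_zero_eq_one ψ]
    congr 1
    by_cases h3 : r = 3
    · subst h3
      rw [nsmul_eq_mul]
      have : ((3 : ℕ) : ZMod 3) = 0 := ZMod.natCast_self 3
      rw [this, zero_mul]
    · rw [← Finset.mul_sum, FiniteField.sum_pow_lt_card_sub_one]
      · simp
      · rw [ZMod.card]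
        have := (Fact.out : Nat.Prime r).two_le
        rcases hr with ⟨k, hk⟩; omega
  have hrel : D * (C * D * C) * D = G • C.submatrix (Equiv.neg (ZMod r)) id := by
    ext i j
    rw [hD, Matrix.mul_diagonal, Matrix.diagonal_mul, Matrix.mul_apply]
    simp only [Matrix.mul_diagonal, Matrix.smul_apply, Matrix.submatrix_apply, hC, id,
      Equiv.neg_apply, smul_eq_mul]
    rw [hG, ← Equiv.sum_comp (Equiv.addRight (i + j)) (fun x => ψ (h * x ^ 2)), Finset.mul_sum, Finset.sum_mul,
      Finset.sum_mul]
    refine Finset.sum_congr rfl fun k _ => ?_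
    simp only [← AddChar.map_add_eq_mul, Equiv.coe_addRight]
    congr 1
    linear_combination (-(i * k) - k * j - i * j) * h2
  have hdet := congrArg Matrix.det hrel
  rw [Matrix.det_smul, Matrix.det_permute, wd_sign_neg hr, ZMod.card] at hdet
  simp only [Matrix.det_mul] at hdet
  have hCC : C.submatrix (Equiv.neg (ZMod r)) id * C = (r : 𝔽) • (1 : Matrix (ZMod r) (ZMod r) 𝔽) := by
    ext i j
    rw [Matrix.mul_apply]
    simp only [Matrix.submatrix_apply, hC, id, Equiv.neg_apply, ← AddChar.map_add_eq_mul,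
      Matrix.smul_apply, smul_eq_mul]
    have := AddChar.sum_mulShift (j - i) hψ
    rw [ZMod.card] at this
    rw [Matrix.one_apply]
    calc _ = ∑ x : ZMod r, ψ (x * (j - i)) := by
          refine Finset.sum_congr rfl fun x _ => ?_
          congr 1; ring
      _ = _ := by
          rw [this]
          by_cases hij : i = j
          · simp [hij]
          · rw [if_neg hij, if_neg (sub_ne_zero.mpr (Ne.symm hij))]; simp
  have hC0 : C.det ≠ 0 := by
    intro h0
    have := congrArg Matrix.det hCC
    rw [Matrix.det_mul, h0, mul_zero, Matrix.det_smul, Matrix.det_one, mul_one] at this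
    exact pow_ne_zero _ hr0 this.symm
  have e1 : C.det = G ^ r * ε := by
    apply mul_right_cancel₀ hC0
    push_cast at hdet
    rw [← hε] at hdet
    linear_combination hdet - C.det ^ 2 * hDdet
  rw [e1]
  obtain ⟨m, hm⟩ := hr
  have hm1 : r / 2 = m := by omega
  have hm2 : (r - 1) / 2 = m := by omega
  have e2 : G ^ r = G * (ε * r) ^ m := by
    rw [← hGsq, hm]; ring
  have e3 : ε ^ m * ε = 1 := by
    rw [hε, hm1, ← pow_mul, ← pow_add]
    apply Even.neg_one_pow
    have := Nat.even_mul_succ_self m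
    rwa [Nat.mul_succ] at this
  rw [e2, hm2, mul_pow]
  linear_combination (G * (r : 𝔽) ^ m) * e3


/-- Formulae for `det(C)` in terms of Gauss sums, with the Legendre symbol `(2/r)`. -/
theorem weil_detC_formula
    {r : ℕ} [Fact (Nat.Prime r)] (hr : Odd r)
    {𝔽 : Type*} [Field 𝔽] {θ : 𝔽} (hθ : IsPrimitiveRoot θ r)
    (C : Matrix (ZMod r) (ZMod r) 𝔽)
    (hC : ∀ i j : ZMod r, C i j = θ ^ (i * j).val) :
    C.det = (r : 𝔽) ^ ((r - 1) / 2) * ∑ ξ : ZMod r, θ ^ (ξ.val * (ξ.val + r) / 2) ∧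
      C.det = ((legendreSym r 2 : ℤ) : 𝔽) * (r : 𝔽) ^ ((r - 1) / 2)
          * ∑ ξ : ZMod r, θ ^ (ξ * ξ).val := by

  have hr2 : r ≠ 2 := by rintro rfl; revert hr; decide
  have hr0 : (r : 𝔽) ≠ 0 := (hθ.neZero').out
  have h20 : (2 : ZMod r) ≠ 0 := by
    intro h
    have h' : ((2 : ℕ) : ZMod r) = 0 := by exact_mod_cast h
    rw [ZMod.natCast_eq_zero_iff, Nat.prime_dvd_prime_iff_eq Fact.out Nat.prime_two] at h'
    exact hr2 h'
  have hψ := AddChar.zmodChar_primitive_of_primitive_root r hθ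
  set ψ := AddChar.zmodChar r ((IsPrimitiveRoot.iff_def θ r).mp hθ).left with hψd
  have hap : ∀ a : ZMod r, θ ^ a.val = ψ a := fun a => rfl
  have h2 : 2 * (2 : ZMod r)⁻¹ = 1 := mul_inv_cancel₀ h20
  have main := wd_main hr hr0 ψ hψ _ h2 C (fun i j => by rw [hC, hap])
  have hs : ∑ ξ : ZMod r, θ ^ (ξ.val * (ξ.val + r) / 2) = ∑ x : ZMod r, ψ ((2 : ZMod r)⁻¹ * x ^ 2) := by
    refine Finset.sum_congr rfl fun x _ => ?_
    rw [← AddChar.zmodChar_apply' ((IsPrimitiveRoot.iff_def θ r).mp hθ).left]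
    congr 1
    have hd : 2 ∣ x.val * (x.val + r) := by
      rw [← even_iff_two_dvd, Nat.even_mul, Nat.even_add]
      have : ¬ Even r := Nat.not_even_iff_odd.mpr hr
      tauto
    apply mul_left_cancel₀ h20
    have := congrArg (Nat.cast (R := ZMod r)) (Nat.mul_div_cancel' hd)
    push_cast at this
    rw [this, ZMod.natCast_self, ZMod.natCast_zmod_val, ← mul_assoc, h2]
    ring
  refine ⟨by rw [hs, main], ?_⟩
  rw [main, wd_gauss hr2 ψ hψ _ (inv_ne_zero h20)]
  have hl : quadraticChar (ZMod r) (2 : ZMod r)⁻¹ = legendreSym r 2 := by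
    have e1 : quadraticChar (ZMod r) (2 : ZMod r)⁻¹ * quadraticChar (ZMod r) 2 = 1 := by
      rw [← map_mul, inv_mul_cancel₀ h20, map_one]
    have e2 := quadraticChar_sq_one h20
    have e3 : legendreSym r 2 = quadraticChar (ZMod r) 2 := by
      simp [legendreSym]
    rw [e3]
    linear_combination quadraticChar (ZMod r) 2 * e1 - quadraticChar (ZMod r) (2 : ZMod r)⁻¹ * e2
  rw [hl]
  simp only [hap, ← pow_two]
  ring
end
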